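/- arXiv:2508.21551 — 2 statements merged into one kernel-verified Lean document; each statement's English description precedes it below -/
import Mathlib

section
/- If G is a graph of order n with minimum degree at least 3 and girth at least 5, then ι(G) ≤ 11n/34. -/
open Classical

/-- The closed neighborhood `N[D]` of a set `D` of vertices. -/
def closedNbhd {V : Type*} (G : SimpleGraph V) (D : Set V) : Set V :=
  {v | v ∈ D ∨ ∃ u ∈ D, G.Adj u v}

/-- `S` is an isolating set of `G`: deleting `N[S]` leaves no edge. -/
def IsIsolatingSet {V : Type*} (G : SimpleGraph V) (S : Set V) : Prop :=
  ∀ u v : V, G.Adj u v → u ∈ closedNbhd G S ∨ v ∈ closedNbhd G S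

/-- The isolation number: the minimum cardinality of an isolating set. -/
noncomputable def isolationNumber {V : Type*} [Fintype V] (G : SimpleGraph V) : ℕ :=
  sInf {k | ∃ S : Set V, IsIsolatingSet G S ∧ S.ncard = k}

/-!
Remove vertices step by step. Let `W` be the set of vertices still to be isolated, charge `33` to
each vertex of `W` and `9`, `10`, `11`, `11`, … to each removed vertex with `1`, `2`, `3`, `4`, …
neighbours in `W`. The total is `33n` at the start, so it is enough that as long as `W` is nonempty,
some removal lowers the charge by `102` for each vertex that it adds to the isolating set.

If no such removal exists, then neighbourhoods in `W` of vertices with many neighbours there show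
that a vertex outside `W` has at most three neighbours in `W`, so that every edge lost lowers the
charge of its outer end, and that `W` induces a graph of maximum degree at most two. Isolated
vertices, paths on at least three vertices and cycles of length at least six can also be removed, so
all components are edges and five-cycles. If a vertex `x` outside `W` has two neighbours in `W`,
they lie in different components by the girth condition, and these two components are removed
together, `x` serving for both. Otherwise each of the at least four edges leaving a component (at
least five for a five-cycle) lowers the charge of its outer end from `9` to `0`, which pays for
removing that component alone.
-/

namespace Isolation

open Finset

section Neighbours

variable {V : Type*} {G : SimpleGraph V} {W R : Finset V} {u v w : V}

/-- The neighbours of `v` inside `W`; the vertex `v` itself may lie in `W` or outside it. -/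
noncomputable def nbrsIn (G : SimpleGraph V) (W : Finset V) (v : V) : Finset V :=
  {w ∈ W | G.Adj v w}

lemma mem_nbrsIn : w ∈ nbrsIn G W v ↔ w ∈ W ∧ G.Adj v w := mem_filter

lemma nbrsIn_subset : nbrsIn G W v ⊆ W := filter_subset _ _

lemma mem_nbrsIn_symm (hv : v ∈ W) (hw : w ∈ nbrsIn G W v) : v ∈ nbrsIn G W w :=
  mem_nbrsIn.2 ⟨hv, (mem_nbrsIn.1 hw).2.symm⟩

lemma nbrsIn_sdiff : nbrsIn G (W \ R) v = nbrsIn G W v \ R := by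
  ext w
  simp only [mem_nbrsIn, mem_sdiff]
  tauto

lemma nbrsIn_sdiff_eq_empty_iff : nbrsIn G (W \ R) v = ∅ ↔ nbrsIn G W v ⊆ R := by
  rw [nbrsIn_sdiff, sdiff_eq_empty_iff_subset]

lemma card_nbrsIn_sdiff_le : #(nbrsIn G (W \ R) v) ≤ #(nbrsIn G W v) :=
  card_le_card (nbrsIn_sdiff.trans_subset sdiff_subset)

lemma card_nbrsIn_sdiff_lt (hw : w ∈ nbrsIn G W v) (hwR : w ∈ R) :
    #(nbrsIn G (W \ R) v) < #(nbrsIn G W v) := by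
  rw [nbrsIn_sdiff]
  exact card_lt_card ⟨sdiff_subset, fun h => (mem_sdiff.1 (h hw)).2 hwR⟩

lemma card_nbrsIn_sdiff_add_card_nbrsIn (hR : R ⊆ W) (v : V) :
    #(nbrsIn G (W \ R) v) + #(nbrsIn G R v) = #(nbrsIn G W v) := by
  have hRv : nbrsIn G R v = nbrsIn G W v ∩ R := by
    ext w
    simp only [mem_nbrsIn, mem_inter]
    grind
  rw [nbrsIn_sdiff, hRv, card_sdiff_add_card_inter]

lemma exists_nbrsIn_eq_pair (h : #(nbrsIn G W v) = 2) (hu : u ∈ nbrsIn G W v) :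
    ∃ w, u ≠ w ∧ nbrsIn G W v = {u, w} := by
  obtain ⟨w, hw⟩ := card_eq_one.1 ((card_erase_of_mem hu).trans (by rw [h]))
  have hwu : w ∈ (nbrsIn G W v).erase u := hw ▸ mem_singleton_self w
  exact ⟨w, (ne_of_mem_erase hwu).symm, by rw [← insert_erase hu, hw]⟩

lemma sum_card_nbrsIn_comm (A B : Finset V) :
    ∑ a ∈ A, #(nbrsIn G B a) = ∑ b ∈ B, #(nbrsIn G A b) := by
  simpa only [bipartiteAbove, bipartiteBelow, nbrsIn, G.adj_comm] using
    sum_card_bipartiteAbove_eq_sum_card_bipartiteBelow (s := A) (t := B) G.Adj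

lemma card_nbrsIn_add_card_nbrsIn_compl [Fintype V] (W : Finset V) (v : V) :
    #(nbrsIn G W v) + #(nbrsIn G Wᶜ v) = (G.neighborSet v).ncard := by
  have hset : G.neighborSet v = (nbrsIn G univ v : Set V) := by
    ext w
    simp [mem_nbrsIn]
  rw [hset, Set.ncard_coe_finset, compl_eq_univ_sdiff, add_comm,
    card_nbrsIn_sdiff_add_card_nbrsIn (subset_univ W)]

end Neighbours

section Girth

variable {V : Type*} {G : SimpleGraph V} {a b c e : V}

lemma not_adj_of_adj_of_adj (hg : 4 ≤ G.egirth) (hab : G.Adj a b) (hbc : G.Adj b c) :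
    ¬ G.Adj c a := by
  intro hca
  have hcircuit : (SimpleGraph.Walk.cons hab (.cons hbc (.cons hca .nil))).IsCircuit := by
    simp [SimpleGraph.Walk.isCircuit_def, SimpleGraph.Walk.isTrail_def, hab.ne, hab.ne', hbc.ne,
      hca.ne, hca.ne']
  have hlength := hg.trans hcircuit.egirth_le_length
  norm_cast at hlength

lemma eq_of_common_adj (hg : 5 ≤ G.egirth) (hac : a ≠ c) (hab : G.Adj a b) (hbc : G.Adj b c)
    (hae : G.Adj a e) (hec : G.Adj e c) : b = e := by
  by_contra hbe
  have hcircuit : (SimpleGraph.Walk.cons hab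
      (.cons hbc (.cons hec.symm (.cons hae.symm .nil)))).IsCircuit := by
    simp [SimpleGraph.Walk.isCircuit_def, SimpleGraph.Walk.isTrail_def, hab.ne, hab.ne', hbc.ne,
      hac, hac.symm, hae.ne, hec.ne', hbe]
  have hlength := hg.trans hcircuit.egirth_le_length
  norm_cast at hlength

end Girth

section Covering

variable {V : Type*} {G : SimpleGraph V} {W R S T A B C : Finset V} {u v : V}

lemma mem_closedNbhd_of_mem (hv : v ∈ T) : v ∈ closedNbhd G T := Or.inl hv

lemma mem_closedNbhd_of_adj (hu : u ∈ T) (huv : G.Adj u v) : v ∈ closedNbhd G T :=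
  Or.inr ⟨u, hu, huv⟩

lemma closedNbhd_mono {C D : Set V} (h : C ⊆ D) : closedNbhd G C ⊆ closedNbhd G D :=
  fun _ hv => hv.imp (@h _) fun ⟨u, hu, huv⟩ => ⟨u, h hu, huv⟩

/-- Every edge with one end in `A` and the other in `B` has an end in `N[T]`. With `A = B = W` this
says that `T` isolates the subgraph induced by `W`, except that `T` may use vertices outside `W`. -/
def CoversEdges (G : SimpleGraph V) (T A B : Finset V) : Prop :=
  ∀ u ∈ A, ∀ v ∈ B, G.Adj u v → u ∈ closedNbhd G T ∨ v ∈ closedNbhd G T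

lemma CoversEdges.symm (h : CoversEdges G T A B) : CoversEdges G T B A :=
  fun u hu v hv huv => (h v hv u hu huv.symm).symm

lemma CoversEdges.mono (hST : S ⊆ T) (h : CoversEdges G S A B) : CoversEdges G T A B :=
  fun u hu v hv huv => (h u hu v hv huv).imp (@closedNbhd_mono _ _ _ _ (coe_subset.2 hST) _)
    (@closedNbhd_mono _ _ _ _ (coe_subset.2 hST) _)

lemma CoversEdges.mono_right (hBC : B ⊆ C) (h : CoversEdges G T A C) : CoversEdges G T A B :=
  fun u hu v hv => h u hu v (hBC hv)

lemma coversEdges_of_forall_nbrsIn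
    (h : ∀ u ∈ A, u ∈ closedNbhd G T ∨ ∀ v ∈ nbrsIn G B u, v ∈ closedNbhd G T) :
    CoversEdges G T A B :=
  fun u hu v hv huv => (h u hu).imp_right fun hN => hN v (mem_nbrsIn.2 ⟨hv, huv⟩)

lemma coversEdges_of_forall_mem_closedNbhd (h : ∀ u ∈ A, u ∈ closedNbhd G T) :
    CoversEdges G T A B :=
  coversEdges_of_forall_nbrsIn fun u hu => Or.inl (h u hu)

lemma CoversEdges.union_left (hA : CoversEdges G T A W) (hB : CoversEdges G T B W) :
    CoversEdges G T (A ∪ B) W :=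
  fun u hu => (mem_union.1 hu).elim (hA u) (hB u)

lemma CoversEdges.union_of_sdiff (hS : CoversEdges G S (W \ R) (W \ R))
    (hT : CoversEdges G T R W) : CoversEdges G (S ∪ T) W W := by
  replace hS := hS.mono (subset_union_left (s₂ := T))
  replace hT := hT.mono (subset_union_right (s₁ := S))
  intro u hu v hv huv
  by_cases huR : u ∈ R
  · exact hT u huR v hv huv
  by_cases hvR : v ∈ R
  · exact hT.symm u hu v hvR huv
  exact hS u (mem_sdiff.2 ⟨hu, huR⟩) v (mem_sdiff.2 ⟨hv, hvR⟩) huv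

lemma isolationNumber_le_card_of_coversEdges_univ [Fintype V]
    (h : CoversEdges G S univ univ) : isolationNumber G ≤ #S :=
  Nat.sInf_le ⟨S, fun u v => h u (mem_univ u) v (mem_univ v), Set.ncard_coe_finset S⟩

/-- `R` is a union of connected components of the subgraph induced by `W`. -/
structure IsClosedIn (G : SimpleGraph V) (W R : Finset V) : Prop where
  subset : R ⊆ W
  nbrsIn_subset : ∀ u ∈ R, nbrsIn G W u ⊆ R

lemma IsClosedIn.mem_of_adj (hR : IsClosedIn G W R) (hu : u ∈ R) (hv : v ∈ W)
    (huv : G.Adj u v) : v ∈ R :=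
  hR.nbrsIn_subset u hu (mem_nbrsIn.2 ⟨hv, huv⟩)

lemma IsClosedIn.union (hA : IsClosedIn G W A) (hB : IsClosedIn G W B) :
    IsClosedIn G W (A ∪ B) where
  subset := union_subset hA.subset hB.subset
  nbrsIn_subset u hu := by
    rcases mem_union.1 hu with huA | huB
    · exact (hA.nbrsIn_subset u huA).trans subset_union_left
    · exact (hB.nbrsIn_subset u huB).trans subset_union_right

lemma IsClosedIn.coversEdges (hR : IsClosedIn G W R) (hT : CoversEdges G T R R) :
    CoversEdges G T R W :=
  fun u hu v hv huv => hT u hu v (hR.mem_of_adj hu hv huv) huv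

end Covering

section Potential

/-- The potential of a removed vertex with `i` neighbours among the remaining vertices. -/
def weight : ℕ → ℕ
  | 0 => 0
  | 1 => 9
  | 2 => 10
  | _ => 11

lemma weight_mono : Monotone weight := by
  refine monotone_nat_of_le_succ fun i => ?_
  rcases i with _ | _ | _ | i <;> simp [weight]

lemma weight_le_eleven (i : ℕ) : weight i ≤ 11 := by
  rcases i with _ | _ | _ | i <;> simp [weight]

lemma weight_add_one_mul_le {i j : ℕ} (h : i + j ≤ 3) : weight i + 1 * j ≤ weight (i + j) := by
  have hi : i ≤ 3 := by omega
  have hj : j ≤ 3 := by omega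
  interval_cases i <;> interval_cases j <;> simp_all [weight]

lemma weight_add_nine_mul_le {i j : ℕ} (h : i + j ≤ 1) : weight i + 9 * j ≤ weight (i + j) := by
  have hi : i ≤ 1 := by omega
  have hj : j ≤ 1 := by omega
  interval_cases i <;> interval_cases j <;> simp_all [weight]

variable {V : Type*} {G : SimpleGraph V} {W R : Finset V}

lemma sum_weight_nbrsIn_sdiff_le (A : Finset V) :
    ∑ v ∈ A, weight #(nbrsIn G (W \ R) v) ≤ ∑ v ∈ A, weight #(nbrsIn G W v) :=
  sum_le_sum fun _ _ => weight_mono card_nbrsIn_sdiff_le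

variable [Fintype V]

/-- The potential of the induced subgraph on `W` in the induction, scaled so that a vertex of an
isolating set costs `102`: each vertex of `W` counts `33`, each other vertex its `weight`. The bound
`11/34` of the theorem is `33/102`. -/
noncomputable def potential (G : SimpleGraph V) (W : Finset V) : ℕ :=
  33 * #W + ∑ v ∈ Wᶜ, weight #(nbrsIn G W v)

lemma potential_univ : potential G univ = 33 * Fintype.card V := by
  simp [potential]

lemma potential_sdiff_add (hR : R ⊆ W) :
    potential G (W \ R) + 33 * #R + ∑ v ∈ Wᶜ, weight #(nbrsIn G W v) =
      potential G W + ∑ v ∈ Wᶜ, weight #(nbrsIn G (W \ R) v) +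
        ∑ r ∈ R, weight #(nbrsIn G (W \ R) r) := by
  have hcompl : (W \ R)ᶜ = Wᶜ ∪ R := by
    ext v
    simp only [mem_compl, mem_sdiff, mem_union]
    tauto
  have hdisj : Disjoint Wᶜ R := disjoint_compl_left.mono_right hR
  have hcard : #(W \ R) + #R = #W := card_sdiff_add_card_eq_card hR
  simp only [potential, hcompl, sum_union hdisj]
  omega

/-- Each `r ∈ R` sends at least `3 - |N_W(r)|` edges to `Wᶜ`, each of which lowers the weight of its
other end by at least `c` when `R` is removed. -/
lemma sum_weight_nbrsIn_sdiff_add_le (hmin : ∀ v, 3 ≤ (G.neighborSet v).ncard) (hR : R ⊆ W)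
    {c k : ℕ} (hc : ∀ {i j}, i + j ≤ k → weight i + c * j ≤ weight (i + j))
    (hk : ∀ v ∉ W, #(nbrsIn G W v) ≤ k) :
    ∑ v ∈ Wᶜ, weight #(nbrsIn G (W \ R) v) + c * ∑ r ∈ R, (3 - #(nbrsIn G W r)) ≤
      ∑ v ∈ Wᶜ, weight #(nbrsIn G W v) := by
  have hdeficit : ∑ r ∈ R, (3 - #(nbrsIn G W r)) ≤ ∑ v ∈ Wᶜ, #(nbrsIn G R v) := by
    rw [sum_card_nbrsIn_comm]
    refine sum_le_sum fun r _ => ?_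
    rw [Nat.sub_le_iff_le_add', card_nbrsIn_add_card_nbrsIn_compl]
    exact hmin r
  calc
    _ ≤ ∑ v ∈ Wᶜ, weight #(nbrsIn G (W \ R) v) + c * ∑ v ∈ Wᶜ, #(nbrsIn G R v) := by gcongr
    _ = ∑ v ∈ Wᶜ, (weight #(nbrsIn G (W \ R) v) + c * #(nbrsIn G R v)) := by
      rw [sum_add_distrib, mul_sum]
    _ ≤ ∑ v ∈ Wᶜ, weight #(nbrsIn G W v) := by
      refine sum_le_sum fun v hv => ?_
      have hsplit := card_nbrsIn_sdiff_add_card_nbrsIn (G := G) hR v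
      rw [← hsplit]
      exact hc (hsplit.trans_le (hk v (mem_compl.1 hv)))

end Potential

section Reducibility

variable {V : Type*} [Fintype V] {G : SimpleGraph V} {W R T : Finset V}

/-- Some nonempty `R ⊆ W` can be removed from `W` at the expense of putting a set `T` into the
isolating set, where the drop of the potential pays for `T`. -/
def Reducible (G : SimpleGraph V) (W : Finset V) : Prop :=
  ∃ R T : Finset V, R ⊆ W ∧ R.Nonempty ∧ CoversEdges G T R W ∧
    102 * #T + potential G (W \ R) ≤ potential G W

theorem exists_coversEdges_of_forall_reducible
    (hred : ∀ W : Finset V, W.Nonempty → Reducible G W) (W : Finset V) :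
    ∃ S, CoversEdges G S W W ∧ 102 * #S ≤ potential G W := by
  induction W using Finset.strongInduction with
  | H W ih =>
    rcases W.eq_empty_or_nonempty with rfl | hW
    · exact ⟨∅, by simp [CoversEdges], by simp⟩
    obtain ⟨R, T, hRW, hR, hT, hpot⟩ := hred W hW
    obtain ⟨S, hS, hScard⟩ := ih (W \ R) (sdiff_ssubset hRW hR)
    have hunion := card_union_le S T
    exact ⟨S ∪ T, hS.union_of_sdiff hT, by omega⟩

lemma reducible_of_gain {g : ℕ} (hRW : R ⊆ W) (hR : R.Nonempty) (hT : CoversEdges G T R W)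
    (hg : ∑ v ∈ Wᶜ, weight #(nbrsIn G (W \ R) v) + g ≤ ∑ v ∈ Wᶜ, weight #(nbrsIn G W v))
    (hcost : 102 * #T + ∑ r ∈ R, weight #(nbrsIn G (W \ R) r) ≤ 33 * #R + g) :
    Reducible G W := by
  have hpot := potential_sdiff_add (G := G) hRW
  exact ⟨R, T, hRW, hR, hT, by omega⟩

lemma reducible_of_sum_weight_le (hRW : R ⊆ W) (hR : R.Nonempty) (hT : CoversEdges G T R W)
    (hcost : 102 * #T + ∑ r ∈ R, weight #(nbrsIn G (W \ R) r) ≤ 33 * #R) : Reducible G W :=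
  reducible_of_gain (g := 0) hRW hR hT (sum_weight_nbrsIn_sdiff_le Wᶜ) hcost

lemma IsClosedIn.reducible_of_gain {g : ℕ} (hRW : IsClosedIn G W R) (hR : R.Nonempty)
    (hT : CoversEdges G T R R)
    (hg : ∑ v ∈ Wᶜ, weight #(nbrsIn G (W \ R) v) + g ≤ ∑ v ∈ Wᶜ, weight #(nbrsIn G W v))
    (hcost : 102 * #T ≤ 33 * #R + g) : Reducible G W := by
  refine Isolation.reducible_of_gain hRW.subset hR (hRW.coversEdges hT) hg ?_
  have hzero : ∑ r ∈ R, weight #(nbrsIn G (W \ R) r) = 0 := sum_eq_zero fun r hr => by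
    rw [nbrsIn_sdiff_eq_empty_iff.2 (hRW.nbrsIn_subset r hr), card_empty, weight]
  rwa [hzero]

lemma IsClosedIn.reducible (hRW : IsClosedIn G W R) (hR : R.Nonempty) (hT : CoversEdges G T R R)
    (hcost : 102 * #T ≤ 33 * #R) : Reducible G W :=
  hRW.reducible_of_gain (g := 0) hR hT (sum_weight_nbrsIn_sdiff_le Wᶜ) hcost

end Reducibility

section DegreeBounds

variable {V : Type*} [Fintype V] {G : SimpleGraph V} {W : Finset V} {u v w x : V}

lemma reducible_of_nbrsIn_eq_empty (hv : v ∈ W) (h : nbrsIn G W v = ∅) : Reducible G W := by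
  have hclosed : IsClosedIn G W {v} := ⟨by simpa using hv, by simp [h]⟩
  exact hclosed.reducible (T := ∅) (by simp) (by simp [CoversEdges]) (by simp)

lemma reducible_of_weight_le_of_mem_nbrsIn {b : ℕ} (hv : v ∈ W)
    (hb : ∀ r ∈ nbrsIn G W v, weight #(nbrsIn G (W \ insert v (nbrsIn G W v)) r) ≤ b)
    -- `69 = 102 - 33`, where `33` is the charge of `v`
    (hcost : 69 + #(nbrsIn G W v) * b ≤ 33 * #(nbrsIn G W v)) : Reducible G W := by
  have hvN : v ∉ nbrsIn G W v := by simp [mem_nbrsIn]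
  refine reducible_of_sum_weight_le (R := insert v (nbrsIn G W v)) (T := {v})
    (insert_subset hv nbrsIn_subset) (insert_nonempty _ _)
    (coversEdges_of_forall_mem_closedNbhd fun u hu => ?_) ?_
  · rcases mem_insert.1 hu with rfl | hu
    · exact mem_closedNbhd_of_mem (mem_singleton_self _)
    · exact mem_closedNbhd_of_adj (mem_singleton_self _) (mem_nbrsIn.1 hu).2
  · have hsum := sum_le_card_nsmul _ _ b hb
    rw [smul_eq_mul] at hsum
    rw [sum_insert hvN, nbrsIn_sdiff_eq_empty_iff.2 (subset_insert v _), card_empty, weight,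
      card_insert_of_notMem hvN, card_singleton]
    omega

lemma reducible_of_three_le_card_nbrsIn (hv : v ∈ W) (h : 3 ≤ #(nbrsIn G W v)) :
    Reducible G W := by
  obtain ⟨m, hm, hmax⟩ := W.exists_max_image (fun u => #(nbrsIn G W u)) ⟨v, hv⟩
  rcases (h.trans (hmax v hv)).eq_or_lt with hthree | hfour
  · refine reducible_of_weight_le_of_mem_nbrsIn (b := 10) hm (fun r hr => ?_) (by omega)
    have hlt := card_nbrsIn_sdiff_lt (mem_nbrsIn_symm hm hr) (mem_insert_self m (nbrsIn G W m))
    have hle := hmax r (nbrsIn_subset hr)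
    exact weight_mono (b := 2) (by omega)
  · exact reducible_of_weight_le_of_mem_nbrsIn hm (fun r _ => weight_le_eleven _) (by omega)

lemma reducible_of_four_le_card_nbrsIn (htwo : ∀ u ∈ W, #(nbrsIn G W u) ≤ 2) (hx : x ∉ W)
    (h : 4 ≤ #(nbrsIn G W x)) : Reducible G W := by
  refine reducible_of_gain (g := 11) (R := nbrsIn G W x) (T := {x}) nbrsIn_subset
    (card_pos.1 (by omega)) (coversEdges_of_forall_mem_closedNbhd fun u hu =>
      mem_closedNbhd_of_adj (mem_singleton_self x) (mem_nbrsIn.1 hu).2) ?_ ?_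
  · have hxW : x ∈ Wᶜ := mem_compl.2 hx
    have hxweight : 11 ≤ weight #(nbrsIn G W x) := weight_mono (a := 3) (by omega)
    have hrest := sum_weight_nbrsIn_sdiff_le (G := G) (W := W) (R := nbrsIn G W x) (Wᶜ.erase x)
    rw [← add_sum_erase _ _ hxW, ← add_sum_erase _ _ hxW,
      nbrsIn_sdiff_eq_empty_iff.2 Subset.rfl, card_empty, weight]
    omega
  · have hsum := sum_le_card_nsmul (nbrsIn G W x)
      (fun r => weight #(nbrsIn G (W \ nbrsIn G W x) r)) 10 fun r hr =>
        weight_mono (b := 2) (card_nbrsIn_sdiff_le.trans (htwo r (nbrsIn_subset hr)))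
    rw [smul_eq_mul] at hsum
    rw [card_singleton]
    omega

lemma one_le_card_nbrsIn_of_not_reducible (hW : ¬ Reducible G W) (hv : v ∈ W) :
    1 ≤ #(nbrsIn G W v) :=
  one_le_card.2 <| nonempty_iff_ne_empty.2 fun h => hW (reducible_of_nbrsIn_eq_empty hv h)

lemma card_nbrsIn_le_two_of_not_reducible (hW : ¬ Reducible G W) (hv : v ∈ W) :
    #(nbrsIn G W v) ≤ 2 := by
  by_contra! h
  exact hW (reducible_of_three_le_card_nbrsIn hv h)

lemma card_nbrsIn_le_three_of_not_reducible (hW : ¬ Reducible G W) (hx : x ∉ W) :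
    #(nbrsIn G W x) ≤ 3 := by
  by_contra! h
  exact hW <| reducible_of_four_le_card_nbrsIn
    (fun _ => card_nbrsIn_le_two_of_not_reducible hW) hx h

lemma reducible_of_path_three (hmin : ∀ v, 3 ≤ (G.neighborSet v).ncard)
    (hthree : ∀ x ∉ W, #(nbrsIn G W x) ≤ 3) (hv : v ∈ W) (hvw : v ≠ w)
    (hNv : nbrsIn G W v = {u}) (hNu : nbrsIn G W u = {v, w}) (hNw : nbrsIn G W w = {u}) :
    Reducible G W := by
  obtain ⟨hu, hvu⟩ := mem_nbrsIn.1 (hNv ▸ mem_singleton_self u)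
  obtain ⟨hw, huw⟩ : w ∈ W ∧ G.Adj u w := mem_nbrsIn.1 (by simp [hNu])
  have hclosed : IsClosedIn G W {v, u, w} :=
    ⟨by simp [insert_subset_iff, hv, hu, hw], by simp [hNv, hNu, hNw, insert_subset_iff]⟩
  have hcover : CoversEdges G {u} {v, u, w} {v, u, w} :=
    coversEdges_of_forall_mem_closedNbhd (by simp [closedNbhd, hvu.symm, huw])
  refine hclosed.reducible_of_gain (insert_nonempty _ _) hcover
    (sum_weight_nbrsIn_sdiff_add_le hmin hclosed.subset weight_add_one_mul_le hthree) ?_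
  have hvuw : v ∉ ({u, w} : Finset V) := by simp [hvu.ne, hvw]
  have huw' : u ∉ ({w} : Finset V) := by simp [huw.ne]
  simp [sum_insert hvuw, sum_insert huw', card_insert_of_notMem hvuw,
    card_insert_of_notMem huw', hNv, hNu, hNw, card_pair hvw]

lemma reducible_of_path_four (htwo : ∀ u ∈ W, #(nbrsIn G W u) ≤ 2) (hv : v ∈ W) (hvw : v ≠ w)
    (hux : u ≠ x) (hNv : nbrsIn G W v = {u}) (hNu : nbrsIn G W u = {v, w})
    (hNw : nbrsIn G W w = {u, x}) : Reducible G W := by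
  obtain ⟨hu, hvu⟩ := mem_nbrsIn.1 (hNv ▸ mem_singleton_self u)
  obtain ⟨hw, huw⟩ : w ∈ W ∧ G.Adj u w := mem_nbrsIn.1 (by simp [hNu])
  obtain ⟨hx, hwx⟩ : x ∈ W ∧ G.Adj w x := mem_nbrsIn.1 (by simp [hNw])
  have hvx : v ≠ x := by
    rintro rfl
    have : w ∈ nbrsIn G W v := mem_nbrsIn.2 ⟨hw, hwx.symm⟩
    exact huw.ne (mem_singleton.1 (hNv ▸ this)).symm
  have hcover : CoversEdges G {w} {v, u, w, x} W :=
    coversEdges_of_forall_nbrsIn (by simp [closedNbhd, hNv, huw.symm, hwx])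
  refine reducible_of_sum_weight_le (by simp [insert_subset_iff, hv, hu, hw, hx])
    (insert_nonempty _ _) hcover ?_
  have hvuwx : v ∉ ({u, w, x} : Finset V) := by simp [hvu.ne, hvw, hvx]
  have huwx : u ∉ ({w, x} : Finset V) := by simp [huw.ne, hux]
  have hwx' : w ∉ ({x} : Finset V) := by simp [hwx.ne]
  have hweightx : weight #(nbrsIn G (W \ {v, u, w, x}) x) ≤ 9 := by
    have := card_nbrsIn_sdiff_lt (R := {v, u, w, x}) (mem_nbrsIn.2 ⟨hw, hwx.symm⟩) (by simp)
    have := htwo x hx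
    exact weight_mono (b := 1) (by omega)
  have hempty : nbrsIn G (W \ {v, u, w, x}) v = ∅ ∧ nbrsIn G (W \ {v, u, w, x}) u = ∅ ∧
      nbrsIn G (W \ {v, u, w, x}) w = ∅ := by
    simp [nbrsIn_sdiff_eq_empty_iff, hNv, hNu, hNw, insert_subset_iff]
  rw [sum_insert hvuwx, sum_insert huwx, sum_insert hwx', sum_singleton,
    card_insert_of_notMem hvuwx, card_insert_of_notMem huwx, card_pair hwx.ne, card_singleton,
    hempty.1, hempty.2.1, hempty.2.2, card_empty, weight]
  omega

lemma reducible_of_path_end (hmin : ∀ v, 3 ≤ (G.neighborSet v).ncard)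
    (hv : v ∈ W) (hNv : nbrsIn G W v = {u}) (hu : #(nbrsIn G W u) = 2) : Reducible G W := by
  by_contra hW
  have hvu : v ∈ nbrsIn G W u := mem_nbrsIn_symm hv (hNv ▸ mem_singleton_self u)
  obtain ⟨w, hvw, hNu⟩ := exists_nbrsIn_eq_pair hu hvu
  have hwu : w ∈ nbrsIn G W u := by simp [hNu]
  have huw : u ∈ nbrsIn G W w :=
    mem_nbrsIn_symm (nbrsIn_subset (hNv ▸ mem_singleton_self u)) hwu
  have hw : w ∈ W := nbrsIn_subset hwu
  rcases (one_le_card_nbrsIn_of_not_reducible hW hw).eq_or_lt with hone | htwo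
  · obtain ⟨a, ha⟩ := card_eq_one.1 hone.symm
    obtain rfl := mem_singleton.1 (ha ▸ huw)
    exact hW <| reducible_of_path_three hmin
      (fun _ => card_nbrsIn_le_three_of_not_reducible hW) hv hvw hNv hNu ha
  · obtain ⟨x, hux, hNw⟩ := exists_nbrsIn_eq_pair
      ((card_nbrsIn_le_two_of_not_reducible hW hw).antisymm htwo) huw
    exact hW <| reducible_of_path_four (fun _ => card_nbrsIn_le_two_of_not_reducible hW)
      hv hvw hux hNv hNu hNw

lemma card_nbrsIn_eq_of_not_reducible (hmin : ∀ v, 3 ≤ (G.neighborSet v).ncard)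
    (hW : ¬ Reducible G W) (hv : v ∈ W) (hu : u ∈ nbrsIn G W v) :
    #(nbrsIn G W u) = #(nbrsIn G W v) := by
  have hle : ∀ {v u}, v ∈ W → u ∈ nbrsIn G W v → #(nbrsIn G W u) ≤ #(nbrsIn G W v) := by
    intro v u hv hu
    by_contra! hlt
    have hvone := one_le_card_nbrsIn_of_not_reducible hW hv
    have hutwo := card_nbrsIn_le_two_of_not_reducible hW (nbrsIn_subset hu)
    obtain ⟨a, ha⟩ := card_eq_one.1 (show #(nbrsIn G W v) = 1 by omega)
    obtain rfl := mem_singleton.1 (ha ▸ hu)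
    exact hW (reducible_of_path_end hmin hv ha (by omega))
  exact (hle hv hu).antisymm (hle (nbrsIn_subset hu) (mem_nbrsIn_symm hv hu))

end DegreeBounds

section Threads

variable {V : Type*} {G : SimpleGraph V} {W : Finset V} {f : ℕ → V} {n : ℕ} {v : V}

/-- `f` is an infinite walk inside `W` without turning back, all of whose vertices have exactly two
neighbours in `W`. Following it from `f 0` traverses a cycle component of the subgraph induced by
`W`. -/
structure IsThread (G : SimpleGraph V) (W : Finset V) (f : ℕ → V) : Prop where
  mem : ∀ i, f i ∈ W
  adj : ∀ i, G.Adj (f i) (f (i + 1))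
  card_nbrsIn : ∀ i, #(nbrsIn G W (f i)) = 2
  ne_add_two : ∀ i, f i ≠ f (i + 2)

lemma exists_isThread
    (hreg : ∀ u ∈ W, ∀ w ∈ nbrsIn G W u, #(nbrsIn G W w) = #(nbrsIn G W u))
    (hv : v ∈ W) (hcard : #(nbrsIn G W v) = 2) : ∃ f, IsThread G W f ∧ f 0 = v := by
  let IsDart (d : V × V) : Prop :=
    d.1 ∈ W ∧ #(nbrsIn G W d.1) = 2 ∧ d.2 ∈ nbrsIn G W d.1
  have hstep : ∀ d : {d // IsDart d}, ∃ e : {d // IsDart d}, e.1.1 = d.1.2 ∧ e.1.2 ≠ d.1.1 := by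
    rintro ⟨⟨p, q⟩, hp, hpcard, hq⟩
    have hqcard : #(nbrsIn G W q) = 2 := (hreg p hp q hq).trans hpcard
    obtain ⟨r, hr, hrp⟩ := exists_mem_ne (by omega : 1 < #(nbrsIn G W q)) p
    exact ⟨⟨(q, r), nbrsIn_subset hq, hqcard, hr⟩, rfl, hrp⟩
  choose next hnext using hstep
  obtain ⟨u, hu⟩ := card_pos.1 (by omega : 0 < #(nbrsIn G W v))
  let d : ℕ → {d // IsDart d} := fun i => next^[i] ⟨(v, u), hv, hcard, hu⟩
  have hsucc : ∀ i, d (i + 1) = next (d i) := fun i => Function.iterate_succ_apply' ..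
  have hfst : ∀ i, (d (i + 1)).1.1 = (d i).1.2 := fun i => by rw [hsucc, (hnext _).1]
  refine ⟨fun i => (d i).1.1, ⟨fun i => (d i).2.1, fun i => ?_, fun i => (d i).2.2.1,
    fun i => ?_⟩, rfl⟩
  · rw [hfst]
    exact (mem_nbrsIn.1 (d i).2.2.2).2
  · rw [hfst, hsucc]
    exact (hnext (d i)).2.symm

namespace IsThread

lemma nbrsIn_succ (hf : IsThread G W f) (i : ℕ) :
    nbrsIn G W (f (i + 1)) = {f i, f (i + 2)} := by
  refine (eq_of_subset_of_card_le ?_ ?_).symm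
  · simp [insert_subset_iff, mem_nbrsIn, hf.mem, (hf.adj i).symm, hf.adj (i + 1)]
  · rw [hf.card_nbrsIn, card_pair (hf.ne_add_two i)]

lemma ne_add_three (hf : IsThread G W f) (hg : 4 ≤ G.egirth) (i : ℕ) : f i ≠ f (i + 3) :=
  fun h => not_adj_of_adj_of_adj hg (hf.adj i) (hf.adj (i + 1)) (h ▸ hf.adj (i + 2))

lemma ne_add_four (hf : IsThread G W f) (hg : 5 ≤ G.egirth) (i : ℕ) : f i ≠ f (i + 4) :=
  fun h => hf.ne_add_two (i + 1) <| eq_of_common_adj hg (hf.ne_add_two i) (hf.adj i)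
    (hf.adj (i + 1)) (h ▸ hf.adj (i + 3)).symm (hf.adj (i + 2)).symm

/-- The first vertex that a thread revisits is its starting point. -/
lemma injOn_range (hf : IsThread G W f) (h : ∀ k, 0 < k → k < n → f 0 ≠ f k) :
    Set.InjOn f (range n) := by
  have hlt : ∀ j < n, ∀ i < j, f i ≠ f j := by
    intro j
    induction j using Nat.strong_induction_on with
    | _ j ih =>
      intro hj i hij heq
      rcases i with _ | i
      · exact h j hij hj heq
      obtain ⟨j, rfl⟩ : ∃ k, j = k + 1 := ⟨j - 1, by omega⟩
      have hmem : f j ∈ nbrsIn G W (f (i + 1)) := by simp [heq, hf.nbrsIn_succ]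
      rw [hf.nbrsIn_succ, mem_insert, mem_singleton] at hmem
      rcases hmem with hback | hforth
      · exact ih j (by omega) (by omega) i (by omega) hback.symm
      rcases lt_trichotomy (i + 2) j with hafter | rfl | hbefore
      · exact ih j (by omega) (by omega) (i + 2) hafter hforth.symm
      · exact hf.ne_add_two (i + 1) heq
      · obtain rfl : j = i + 1 := by omega
        exact (hf.adj (i + 1)).ne heq
  intro i hi j hj heq
  rw [coe_range, Set.mem_Iio] at hi hj
  rcases lt_trichotomy i j with hij | hij | hij
  · exact absurd heq (hlt j hj i hij)
  · exact hij
  · exact absurd heq.symm (hlt i hi j hij)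

lemma apply_zero_ne_of_lt_five (hf : IsThread G W f) (hg : 5 ≤ G.egirth) {k : ℕ} (hk : 0 < k)
    (hk5 : k < 5) : f 0 ≠ f k := by
  interval_cases k
  · exact (hf.adj 0).ne
  · exact hf.ne_add_two 0
  · exact hf.ne_add_three (le_trans (by norm_num) hg) 0
  · exact hf.ne_add_four hg 0

lemma isClosedIn_image (hf : IsThread G W f) (hn : 3 ≤ n) (hinj : Set.InjOn f (range n))
    (h : f n = f 0) : IsClosedIn G W ((range n).image f) := by
  have hmem : ∀ i ≤ n, f i ∈ (range n).image f := by
    intro i hi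
    rcases hi.eq_or_lt with rfl | hi
    · exact h ▸ mem_image_of_mem f (mem_range.2 (by omega))
    · exact mem_image_of_mem f (mem_range.2 hi)
  have hinterior : ∀ i < n, 0 < i → nbrsIn G W (f i) ⊆ (range n).image f := by
    intro i hi hpos
    obtain ⟨i, rfl⟩ : ∃ k, i = k + 1 := ⟨i - 1, by omega⟩
    rw [hf.nbrsIn_succ, insert_subset_iff, singleton_subset_iff]
    exact ⟨hmem i (by omega), hmem (i + 2) (by omega)⟩
  have hstart : nbrsIn G W (f 0) = {f 1, f (n - 1)} := by
    refine (eq_of_subset_of_card_le ?_ ?_).symm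
    · have hlast := hf.adj (n - 1)
      rw [Nat.sub_add_cancel (by omega), h] at hlast
      simp [insert_subset_iff, mem_nbrsIn, hf.mem, hf.adj 0, hlast.symm]
    · have hne : f 1 ≠ f (n - 1) := fun heq => by
        have := hinj (by simp; omega) (by simp; omega) heq
        omega
      rw [hf.card_nbrsIn, card_pair hne]
  refine ⟨image_subset_iff.2 fun i _ => hf.mem i, forall_mem_image.2 fun i hi => ?_⟩
  rcases Nat.eq_zero_or_pos i with rfl | hpos
  · rw [hstart, insert_subset_iff, singleton_subset_iff]
    exact ⟨hmem 1 (by omega), hmem (n - 1) (by omega)⟩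
  · exact hinterior i (mem_range.1 hi) hpos

lemma sum_three_sub_card_nbrsIn (hf : IsThread G W f) (hinj : Set.InjOn f (range n)) :
    ∑ r ∈ (range n).image f, (3 - #(nbrsIn G W r)) = n := by
  simp [sum_image hinj, hf.card_nbrsIn]

end IsThread

end Threads

section LongCycles

variable {V : Type*} [Fintype V] {G : SimpleGraph V} {W : Finset V} {f : ℕ → V}

lemma IsThread.reducible_of_six_cycle (hf : IsThread G W f)
    (hmin : ∀ v, 3 ≤ (G.neighborSet v).ncard) (hthree : ∀ x ∉ W, #(nbrsIn G W x) ≤ 3)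
    (hinj : Set.InjOn f (range 6)) (h : f 6 = f 0) : Reducible G W := by
  have hclosed : IsClosedIn G W ((range 6).image f) :=
    hf.isClosedIn_image (by norm_num) hinj h
  have hcover : CoversEdges G {f 0, f 3} ((range 6).image f) ((range 6).image f) := by
    refine coversEdges_of_forall_mem_closedNbhd (forall_mem_image.2 fun i hi => ?_)
    have hlast : G.Adj (f 0) (f 5) := h ▸ (hf.adj 5).symm
    rw [mem_range] at hi
    interval_cases i <;> simp [closedNbhd, hf.adj 0, (hf.adj 2).symm, hf.adj 3, hlast]
  refine hclosed.reducible_of_gain (by simp) hcover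
    (sum_weight_nbrsIn_sdiff_add_le hmin hclosed.subset weight_add_one_mul_le hthree) ?_
  have hT : #{f 0, f 3} ≤ 2 := card_le_two
  rw [hf.sum_three_sub_card_nbrsIn hinj, card_image_of_injOn hinj, card_range]
  omega

lemma IsThread.reducible_of_injOn_range_seven (hf : IsThread G W f)
    (hinj : Set.InjOn f (range 7)) : Reducible G W := by
  have hcover : CoversEdges G {f 1, f 5} ((range 7).image f) W := by
    refine coversEdges_of_forall_nbrsIn (forall_mem_image.2 fun i hi => ?_)
    rw [mem_range] at hi
    interval_cases i <;> simp [closedNbhd, (hf.adj 0).symm, hf.adj 1, (hf.adj 4).symm, hf.adj 5,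
      hf.nbrsIn_succ 2]
  have hinterior : ∀ i < 5, nbrsIn G (W \ (range 7).image f) (f (i + 1)) = ∅ := by
    intro i hi
    rw [nbrsIn_sdiff_eq_empty_iff, hf.nbrsIn_succ, insert_subset_iff, singleton_subset_iff]
    exact ⟨mem_image_of_mem f (mem_range.2 (by omega)), mem_image_of_mem f (mem_range.2 (by omega))⟩
  have hend : ∀ i j, j < 7 → G.Adj (f i) (f j) →
      weight #(nbrsIn G (W \ (range 7).image f) (f i)) ≤ 9 := by
    intro i j hj hij
    have hlt := card_nbrsIn_sdiff_lt (mem_nbrsIn.2 ⟨hf.mem j, hij⟩)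
      (mem_image_of_mem f (mem_range.2 hj))
    rw [hf.card_nbrsIn] at hlt
    exact weight_mono (b := 1) (by omega)
  refine reducible_of_sum_weight_le (image_subset_iff.2 fun i _ => hf.mem i) (by simp) hcover ?_
  have hT : #{f 1, f 5} ≤ 2 := card_le_two
  have hfirst := hend 0 1 (by norm_num) (hf.adj 0)
  have hlast := hend 6 5 (by norm_num) (hf.adj 5).symm
  rw [sum_image hinj, card_image_of_injOn hinj, sum_range_succ, sum_range_succ',
    sum_eq_zero fun i hi => by rw [hinterior i (mem_range.1 hi), card_empty, weight], card_range]
  omega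

lemma IsThread.apply_five_eq_of_not_reducible (hf : IsThread G W f)
    (hmin : ∀ v, 3 ≤ (G.neighborSet v).ncard) (hg : 5 ≤ G.egirth) (hW : ¬ Reducible G W) :
    f 5 = f 0 := by
  by_contra h5
  have hne : ∀ k, 0 < k → k < 6 → f 0 ≠ f k := fun k hk hk6 =>
    (Nat.lt_succ_iff_lt_or_eq.1 hk6).elim (hf.apply_zero_ne_of_lt_five hg hk)
      (by rintro rfl; exact Ne.symm h5)
  by_cases h6 : f 6 = f 0
  · exact hW <| hf.reducible_of_six_cycle hmin
      (fun _ => card_nbrsIn_le_three_of_not_reducible hW) (hf.injOn_range hne) h6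
  · refine hW <| hf.reducible_of_injOn_range_seven (hf.injOn_range fun k hk hk7 => ?_)
    exact (Nat.lt_succ_iff_lt_or_eq.1 hk7).elim (hne k hk) (by rintro rfl; exact Ne.symm h6)

end LongCycles

section Pieces

variable {V : Type*} {G : SimpleGraph V} {W R R' S T T' : Finset V} {f : ℕ → V} {u x y z : V}

/-- `R` is a component of the subgraph induced by `W` which is an edge (with `T` empty) or a
five-cycle (with `T` a singleton), and `T` isolates the component once its root `y` is removed.
The fields record the consequences of this shape that matter. -/
structure IsPiece (G : SimpleGraph V) (W R T : Finset V) (y : V) : Prop where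
  isClosedIn : IsClosedIn G W R
  mem : y ∈ R
  card_eq : #R = 2 + 3 * #T
  card_le_one : #T ≤ 1
  coversEdges_erase : CoversEdges G T (R.erase y) (R.erase y)
  radius_le_two : ∀ w ∈ R, w = y ∨ G.Adj y w ∨ ∃ q ∈ R, G.Adj y q ∧ G.Adj q w
  le_sum_three_sub_card_nbrsIn : 4 + #T ≤ ∑ r ∈ R, (3 - #(nbrsIn G W r))

lemma isPiece_of_nbrsIn_eq_singleton (hNy : nbrsIn G W y = {u}) (hNu : nbrsIn G W u = {y}) :
    IsPiece G W {y, u} ∅ y := by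
  obtain ⟨hu, hyu⟩ := mem_nbrsIn.1 (hNy ▸ mem_singleton_self u)
  obtain ⟨hy, -⟩ := mem_nbrsIn.1 (hNu ▸ mem_singleton_self y)
  exact
    { isClosedIn := ⟨by simp [insert_subset_iff, hy, hu], by simp [hNy, hNu]⟩
      mem := mem_insert_self _ _
      card_eq := card_pair hyu.ne
      card_le_one := by simp
      coversEdges_erase := by simp [CoversEdges, hyu.ne]
      radius_le_two := by simp [hyu]
      le_sum_three_sub_card_nbrsIn := by simp [sum_pair hyu.ne, hNy, hNu] }

lemma IsThread.coversEdges_five_cycle (hf : IsThread G W f) (h : f 5 = f 0) :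
    CoversEdges G {f 2} (((range 5).image f).erase (f 0)) (W.erase (f 0)) := by
  refine coversEdges_of_forall_nbrsIn fun u hu => ?_
  obtain ⟨hu0, hu⟩ := mem_erase.1 hu
  obtain ⟨i, hi, rfl⟩ := mem_image.1 hu
  rw [mem_range] at hi
  interval_cases i
  · exact absurd rfl hu0
  · exact Or.inl (by simp [closedNbhd, (hf.adj 1).symm])
  · exact Or.inl (by simp [closedNbhd])
  · exact Or.inl (by simp [closedNbhd, hf.adj 2])
  · refine Or.inr fun v hv => ?_
    obtain ⟨hvW, hadj⟩ := mem_nbrsIn.1 hv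
    have hvN : v ∈ nbrsIn G W (f 4) := mem_nbrsIn.2 ⟨mem_of_mem_erase hvW, hadj⟩
    rw [hf.nbrsIn_succ 3, h, mem_insert, mem_singleton] at hvN
    obtain rfl := hvN.resolve_right (ne_of_mem_erase hvW)
    simp [closedNbhd, hf.adj 2]

lemma IsThread.isPiece (hf : IsThread G W f) (hg : 5 ≤ G.egirth) (h : f 5 = f 0) :
    IsPiece G W ((range 5).image f) {f 2} (f 0) := by
  have hinj : Set.InjOn f (range 5) := hf.injOn_range fun _ => hf.apply_zero_ne_of_lt_five hg
  have hlast : G.Adj (f 0) (f 4) := h ▸ (hf.adj 4).symm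
  have hmem : ∀ i < 5, f i ∈ (range 5).image f :=
    fun i hi => mem_image_of_mem f (mem_range.2 hi)
  have hclosed := hf.isClosedIn_image (by norm_num) hinj h
  refine ⟨hclosed, hmem 0 (by norm_num), by simp [card_image_of_injOn hinj], by simp,
    (hf.coversEdges_five_cycle h).mono_right (erase_subset_erase _ hclosed.subset),
    forall_mem_image.2 fun i hi => ?_, by simp [hf.sum_three_sub_card_nbrsIn hinj]⟩
  rw [mem_range] at hi
  interval_cases i
  · exact Or.inl rfl
  · exact Or.inr (Or.inl (hf.adj 0))
  · exact Or.inr (Or.inr ⟨f 1, hmem 1 (by norm_num), hf.adj 0, hf.adj 1⟩)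
  · exact Or.inr (Or.inr ⟨f 4, hmem 4 (by norm_num), hlast, (hf.adj 3).symm⟩)
  · exact Or.inr (Or.inl hlast)

lemma IsPiece.coversEdges (hR : IsPiece G W R T y) (hTS : T ⊆ S) (hy : y ∈ closedNbhd G S) :
    CoversEdges G S R R := by
  intro u hu v hv huv
  by_cases huy : u = y
  · exact Or.inl (huy ▸ hy)
  by_cases hvy : v = y
  · exact Or.inr (hvy ▸ hy)
  exact hR.coversEdges_erase.mono hTS u (mem_erase.2 ⟨huy, hu⟩) v (mem_erase.2 ⟨hvy, hv⟩) huv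

lemma IsPiece.mem_of_isClosedIn (hR : IsPiece G W R T y) (hR' : IsClosedIn G W R')
    (h : ¬ Disjoint R R') : y ∈ R' := by
  obtain ⟨w, hw, hw'⟩ := not_disjoint_iff.1 h
  have hyW : y ∈ W := hR.isClosedIn.subset hR.mem
  rcases hR.radius_le_two w hw with rfl | hyw | ⟨q, hq, hyq, hqw⟩
  · exact hw'
  · exact hR'.mem_of_adj hw' hyW hyw.symm
  · have hqR' := hR'.mem_of_adj hw' (hR.isClosedIn.subset hq) hqw.symm
    exact hR'.mem_of_adj hqR' hyW hyq.symm

/-- A vertex outside `W` with two neighbours in the same piece would lie on a triangle or on a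
four-cycle, as every vertex of a piece is within distance two of its root. -/
lemma IsPiece.disjoint (hR : IsPiece G W R T y) (hR' : IsPiece G W R' T' z)
    (hg : 5 ≤ G.egirth) (hx : x ∉ W) (hyz : y ≠ z) (hxy : G.Adj x y) (hxz : G.Adj x z) :
    Disjoint R R' := by
  by_contra h
  rcases hR'.radius_le_two y (hR.mem_of_isClosedIn hR'.isClosedIn h) with
    rfl | hzy | ⟨q, hq, hzq, hqy⟩
  · exact hyz rfl
  · exact not_adj_of_adj_of_adj (le_trans (by norm_num) hg) hxz hzy hxy.symm
  · have hxq : x = q := eq_of_common_adj hg hyz.symm hxz.symm hxy hzq hqy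
    exact hx (hxq ▸ hR'.isClosedIn.subset hq)

end Pieces

section IrreducibleSets

variable {V : Type*} [Fintype V] {G : SimpleGraph V} {W R R' T T' : Finset V} {x y z : V}

lemma exists_isPiece_of_not_reducible (hmin : ∀ v, 3 ≤ (G.neighborSet v).ncard)
    (hg : 5 ≤ G.egirth) (hW : ¬ Reducible G W) (hy : y ∈ W) : ∃ R T, IsPiece G W R T y := by
  have hreg : ∀ u ∈ W, ∀ w ∈ nbrsIn G W u, #(nbrsIn G W w) = #(nbrsIn G W u) :=
    fun _ hu _ => card_nbrsIn_eq_of_not_reducible hmin hW hu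
  rcases (one_le_card_nbrsIn_of_not_reducible hW hy).eq_or_lt with hone | htwo
  · obtain ⟨u, hNy⟩ := card_eq_one.1 hone.symm
    have hu : u ∈ nbrsIn G W y := hNy ▸ mem_singleton_self u
    obtain ⟨a, hNu⟩ := card_eq_one.1 ((hreg y hy u hu).trans hone.symm)
    obtain rfl := mem_singleton.1 (hNu ▸ mem_nbrsIn_symm hy hu)
    exact ⟨_, _, isPiece_of_nbrsIn_eq_singleton hNy hNu⟩
  · obtain ⟨f, hf, rfl⟩ := exists_isThread hreg hy
      ((card_nbrsIn_le_two_of_not_reducible hW hy).antisymm htwo)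
    exact ⟨_, _, hf.isPiece hg (hf.apply_five_eq_of_not_reducible hmin hg hW)⟩

lemma IsPiece.reducible_of_disjoint (hR : IsPiece G W R T y) (hR' : IsPiece G W R' T' z)
    (hdisj : Disjoint R R') (hxy : G.Adj x y) (hxz : G.Adj x z) : Reducible G W := by
  set S := insert x (T ∪ T')
  have hclosed := hR.isClosedIn.union hR'.isClosedIn
  have hcover : CoversEdges G S (R ∪ R') W :=
    (hR.isClosedIn.coversEdges <| hR.coversEdges
      (subset_union_left.trans (subset_insert _ _))
      (mem_closedNbhd_of_adj (mem_insert_self _ _) hxy)).union_left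
    (hR'.isClosedIn.coversEdges <| hR'.coversEdges
      (subset_union_right.trans (subset_insert _ _))
      (mem_closedNbhd_of_adj (mem_insert_self _ _) hxz))
  refine hclosed.reducible ⟨y, mem_union_left _ hR.mem⟩
    (hcover.mono_right hclosed.subset) ?_
  have hS : #S ≤ #T + #T' + 1 := (card_insert_le _ _).trans (by grw [card_union_le])
  rw [card_union_of_disjoint hdisj, hR.card_eq, hR'.card_eq]
  have := hR.card_le_one
  have := hR'.card_le_one
  omega

lemma IsPiece.reducible (hR : IsPiece G W R T y) (hmin : ∀ v, 3 ≤ (G.neighborSet v).ncard)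
    (hone : ∀ x ∉ W, #(nbrsIn G W x) ≤ 1) : Reducible G W := by
  refine hR.isClosedIn.reducible_of_gain ⟨y, hR.mem⟩
    (hR.coversEdges (subset_insert y T) (mem_closedNbhd_of_mem (mem_insert_self _ _)))
    (sum_weight_nbrsIn_sdiff_add_le hmin hR.isClosedIn.subset weight_add_nine_mul_le hone) ?_
  have hcard := card_insert_le y T
  have := hR.card_le_one
  have := hR.card_eq
  have := hR.le_sum_three_sub_card_nbrsIn
  omega

lemma card_nbrsIn_le_one_of_not_reducible (hmin : ∀ v, 3 ≤ (G.neighborSet v).ncard)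
    (hg : 5 ≤ G.egirth) (hW : ¬ Reducible G W) (hx : x ∉ W) : #(nbrsIn G W x) ≤ 1 := by
  by_contra! h
  obtain ⟨y, hy, z, hz, hyz⟩ := one_lt_card.1 h
  obtain ⟨hyW, hxy⟩ := mem_nbrsIn.1 hy
  obtain ⟨hzW, hxz⟩ := mem_nbrsIn.1 hz
  obtain ⟨R, T, hR⟩ := exists_isPiece_of_not_reducible hmin hg hW hyW
  obtain ⟨R', T', hR'⟩ := exists_isPiece_of_not_reducible hmin hg hW hzW
  exact hW <| hR.reducible_of_disjoint hR' (hR.disjoint hR' hg hx hyz hxy hxz) hxy hxz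

theorem reducible_of_nonempty (hmin : ∀ v, 3 ≤ (G.neighborSet v).ncard) (hg : 5 ≤ G.egirth)
    (hne : W.Nonempty) : Reducible G W := by
  by_contra hW
  obtain ⟨y, hy⟩ := hne
  obtain ⟨R, T, hR⟩ := exists_isPiece_of_not_reducible hmin hg hW hy
  exact hW <| hR.reducible hmin fun _ => card_nbrsIn_le_one_of_not_reducible hmin hg hW

end IrreducibleSets

end Isolation

/-- If `G` has order `n`, minimum degree at least 3 and girth at least 5,
then `ι(G) ≤ 11n/34`. -/
theorem isolation_number_girth_five_minDegree_three {V : Type*} [Fintype V]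
    (G : SimpleGraph V) (n : ℕ) (hn : Fintype.card V = n)
    (hmin : ∀ v : V, 3 ≤ (G.neighborSet v).ncard) (hgirth : 5 ≤ G.egirth) :
    (isolationNumber G : ℝ) ≤ 11 * n / 34 := by
  obtain ⟨S, hS, hcost⟩ := Isolation.exists_coversEdges_of_forall_reducible
    (fun _ => Isolation.reducible_of_nonempty hmin hgirth) Finset.univ
  have hle : isolationNumber G ≤ S.card :=
    Isolation.isolationNumber_le_card_of_coversEdges_univ hS
  rw [Isolation.potential_univ, hn] at hcost
  have hnat : 102 * isolationNumber G ≤ 33 * n := (Nat.mul_le_mul_left 102 hle).trans hcost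
  have hreal : (102 : ℝ) * isolationNumber G ≤ 33 * n := mod_cast hnat
  linarith
end

section
/- Let G be a graph, let D ⊆ V(G), and let ω, β1, β2, β3, β4 be positive reals satisfying ω ≥ β4 ≥ β3 ≥ β2 ≥ β1 > 0, ω + 5(ω−β4) ≥ 1, ω + 4(ω−β3) ≥ 1, and β4 + 5(ω−β3) ≥ 1. If in the isolation residual graph G_D^ι either some white vertex has at least 4 white neighbors, or some blue vertex has degree at least 5, then there exists a D-desirable set consisting of a single vertex. -/
open Classical

/-- A vertex is white (w.r.t. `D`) if it lies outside `N[D]` and has a neighbor outside `N[D]`. -/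
def IsWhite {V : Type*} (G : SimpleGraph V) (D : Set V) (v : V) : Prop :=
  v ∉ closedNbhd G D ∧ ∃ u, G.Adj v u ∧ u ∉ closedNbhd G D

/-- A vertex is blue (w.r.t. `D`) if it lies in `N[D]` and has a white neighbor. -/
def IsBlue {V : Type*} (G : SimpleGraph V) (D : Set V) (v : V) : Prop :=
  v ∈ closedNbhd G D ∧ ∃ u, G.Adj v u ∧ IsWhite G D u

/-- The isolation residual graph `G_D^ι`: its edges are the edges of `G` incident
with at least one white vertex. -/
def residualGraph {V : Type*} (G : SimpleGraph V) (D : Set V) : SimpleGraph V where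
  Adj u v := G.Adj u v ∧ (IsWhite G D u ∨ IsWhite G D v)
  symm := ⟨fun u v h => ⟨h.1.symm, h.2.symm⟩⟩
  loopless := ⟨fun v h => G.loopless.irrefl v h.1⟩

/-- The degree of a vertex in the isolation residual graph. -/
noncomputable def resDegree {V : Type*} (G : SimpleGraph V) (D : Set V) (v : V) : ℕ :=
  ((residualGraph G D).neighborSet v).ncard

/-- The number of white neighbors of a vertex. -/
noncomputable def whiteNbhdCount {V : Type*} (G : SimpleGraph V) (D : Set V) (v : V) : ℕ :=
  {u | G.Adj v u ∧ IsWhite G D u}.ncard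

/-- The weight of a vertex in the isolation residual graph. -/
noncomputable def vertexWeight {V : Type*} (G : SimpleGraph V) (D : Set V)
    (ω β1 β2 β3 β4 : ℝ) (v : V) : ℝ :=
  if IsWhite G D v then ω
  else if IsBlue G D v then
    if 4 ≤ resDegree G D v then β4
    else if resDegree G D v = 3 then β3
    else if resDegree G D v = 2 then β2
    else β1
  else 0

/-- The total weight `w(G_D^ι)` of the isolation residual graph. -/
noncomputable def totalWeight {V : Type*} [Fintype V] (G : SimpleGraph V) (D : Set V)
    (ω β1 β2 β3 β4 : ℝ) : ℝ :=
  ∑ v : V, vertexWeight G D ω β1 β2 β3 β4 v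

/-- `A ⊆ V(G) \ D` is `D`-desirable if the weight decrease from `D` to `D ∪ A`
is at least `|A|`. -/
def Desirable {V : Type*} [Fintype V] (G : SimpleGraph V) (ω β1 β2 β3 β4 : ℝ)
    (D A : Set V) : Prop :=
  A ⊆ Dᶜ ∧
    (A.ncard : ℝ) ≤ totalWeight G D ω β1 β2 β3 β4 - totalWeight G (D ∪ A) ω β1 β2 β3 β4

/-- `G` is alluring w.r.t. the weights if for every `D` that is not an isolating set
there exists a `D`-desirable set. -/
def Alluring {V : Type*} [Fintype V] (G : SimpleGraph V) (ω β1 β2 β3 β4 : ℝ) : Prop :=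
  ∀ D : Set V, ¬ IsIsolatingSet G D → ∃ A : Set V, Desirable G ω β1 β2 β3 β4 D A

/-- `C` is the vertex set of a connected component of the subgraph of `G_D^ι`
induced by the white vertices. -/
def IsWhiteComponent {V : Type*} (G : SimpleGraph V) (D : Set V) (C : Set V) : Prop :=
  C ⊆ {v | IsWhite G D v} ∧ (G.induce C).Connected ∧
    ∀ u ∈ C, ∀ v : V, IsWhite G D v → G.Adj u v → v ∈ C

/-!
A vertex that is not white has its weight determined by its number of white neighbors, through a
nondecreasing step function that starts at `0` and levels off at `β4 ≤ ω`. Enlarging `D` only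
destroys white vertices, so no vertex gains weight. Adding `a` to `D` removes the whole weight of
`a`, and each white neighbor of `a` drops from `ω` to at most a bound `B`.

With no information on the neighbors, `B = β4`, which suffices for a white vertex with five white
neighbors. In the absence of such vertices, a white neighbor of a white `a` is left with at most
three white neighbors after losing `a`, so `B = β3`. If no white vertex has even four white
neighbors, `B = β3` also holds around a blue `a`.
-/

/-- The weight of a non-white vertex with `n` white neighbors. Red vertices have no white neighbor,
so their weight is the value at `0`. -/
def nonWhiteWeight (β1 β2 β3 β4 : ℝ) : ℕ → ℝ
  | 0 => 0
  | 1 => β1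
  | 2 => β2
  | 3 => β3
  | _ + 4 => β4

section NonWhiteWeight

variable {β1 β2 β3 β4 : ℝ}

lemma monotone_nonWhiteWeight (h₁ : 0 ≤ β1) (h₂ : β1 ≤ β2) (h₃ : β2 ≤ β3) (h₄ : β3 ≤ β4) :
    Monotone (nonWhiteWeight β1 β2 β3 β4) :=
  monotone_nat_of_le_succ fun
    | 0 => h₁
    | 1 => h₂
    | 2 => h₃
    | 3 => h₄
    | _ + 4 => le_rfl

lemma nonWhiteWeight_le (hmono : Monotone (nonWhiteWeight β1 β2 β3 β4)) (n : ℕ) :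
    nonWhiteWeight β1 β2 β3 β4 n ≤ β4 :=
  hmono (Nat.le_add_right n 4)

end NonWhiteWeight

section Coloring

variable {V : Type*} {G : SimpleGraph V} {D D' : Set V} {a u v : V}

lemma closedNbhd_mono (hD : D ⊆ D') : closedNbhd G D ⊆ closedNbhd G D' :=
  fun _ hv => hv.imp (@hD _) fun ⟨u, hu, huv⟩ => ⟨u, hD hu, huv⟩

lemma subset_closedNbhd : D ⊆ closedNbhd G D :=
  fun _ => Or.inl

lemma mem_closedNbhd_of_adj (ha : a ∈ D) (hav : G.Adj a v) : v ∈ closedNbhd G D :=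
  Or.inr ⟨a, ha, hav⟩

lemma IsWhite.of_superset (hD : D ⊆ D') (hv : IsWhite G D' v) : IsWhite G D v :=
  ⟨fun h => hv.1 (closedNbhd_mono hD h),
    hv.2.imp fun _ hu => ⟨hu.1, fun h => hu.2 (closedNbhd_mono hD h)⟩⟩

lemma IsWhite.notMem (hv : IsWhite G D v) : v ∉ D :=
  fun h => hv.1 (subset_closedNbhd h)

lemma IsWhite.not_adj (hv : IsWhite G D v) (ha : a ∈ D) : ¬ G.Adj a v :=
  fun h => hv.1 (mem_closedNbhd_of_adj ha h)

lemma IsBlue.not_isWhite (hv : IsBlue G D v) : ¬ IsWhite G D v :=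
  fun h => h.1 hv.1

lemma IsBlue.notMem (hv : IsBlue G D v) : v ∉ D := by
  obtain ⟨-, u, hvu, hu⟩ := hv
  exact fun hvD => hu.not_adj hvD hvu

lemma resDegree_eq_whiteNbhdCount (hv : ¬ IsWhite G D v) :
    resDegree G D v = whiteNbhdCount G D v := by
  have hnbhd : (residualGraph G D).neighborSet v = {u | G.Adj v u ∧ IsWhite G D u} := by
    ext u
    simp [residualGraph, hv]
  rw [resDegree, hnbhd, whiteNbhdCount]

variable [Finite V]

lemma whiteNbhdCount_anti (hD : D ⊆ D') (v : V) :
    whiteNbhdCount G D' v ≤ whiteNbhdCount G D v :=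
  Set.ncard_le_ncard fun _ hu => ⟨hu.1, hu.2.of_superset hD⟩

lemma whiteNbhdCount_lt_of_mem (hD : D ⊆ D') (hvu : G.Adj v u) (hu : IsWhite G D u)
    (huD' : u ∈ D') : whiteNbhdCount G D' v < whiteNbhdCount G D v :=
  Set.ncard_lt_ncard <| Set.ssubset_iff_exists.2
    ⟨fun _ hx => ⟨hx.1, hx.2.of_superset hD⟩, u, ⟨hvu, hu⟩, fun hu' => hu'.2.notMem huD'⟩

lemma isBlue_iff_whiteNbhdCount_pos (hv : ¬ IsWhite G D v) :
    IsBlue G D v ↔ 0 < whiteNbhdCount G D v := by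
  rw [whiteNbhdCount, Set.ncard_pos]
  refine ⟨fun hb => hb.2, fun ⟨u, hvu, hu⟩ => ⟨?_, u, hvu, hu⟩⟩
  by_contra hmem
  exact hv ⟨hmem, u, hvu, hu.1⟩

end Coloring

section VertexWeight

variable {V : Type*} {G : SimpleGraph V} {D D' : Set V} {a v : V} {ω β1 β2 β3 β4 : ℝ}

lemma vertexWeight_of_isWhite (hv : IsWhite G D v) : vertexWeight G D ω β1 β2 β3 β4 v = ω :=
  if_pos hv

lemma vertexWeight_of_mem (ha : a ∈ D) : vertexWeight G D ω β1 β2 β3 β4 a = 0 := by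
  rw [vertexWeight, if_neg fun h => h.notMem ha, if_neg fun h => h.notMem ha]

variable [Finite V]

lemma vertexWeight_of_not_isWhite (hv : ¬ IsWhite G D v) :
    vertexWeight G D ω β1 β2 β3 β4 v = nonWhiteWeight β1 β2 β3 β4 (whiteNbhdCount G D v) := by
  rw [vertexWeight, if_neg hv, isBlue_iff_whiteNbhdCount_pos hv, resDegree_eq_whiteNbhdCount hv]
  match whiteNbhdCount G D v with
  | 0 | 1 | 2 | 3 | _ + 4 => simp [nonWhiteWeight]

lemma vertexWeight_anti (hmono : Monotone (nonWhiteWeight β1 β2 β3 β4)) (hω : β4 ≤ ω)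
    (hD : D ⊆ D') (v : V) :
    vertexWeight G D' ω β1 β2 β3 β4 v ≤ vertexWeight G D ω β1 β2 β3 β4 v := by
  by_cases hv' : IsWhite G D' v
  · rw [vertexWeight_of_isWhite hv', vertexWeight_of_isWhite (hv'.of_superset hD)]
  rw [vertexWeight_of_not_isWhite hv']
  by_cases hv : IsWhite G D v
  · rw [vertexWeight_of_isWhite hv]
    exact (nonWhiteWeight_le hmono _).trans hω
  · rw [vertexWeight_of_not_isWhite hv]
    exact hmono (whiteNbhdCount_anti hD v)

end VertexWeight

section Desirable

variable {V : Type*} [Fintype V] {G : SimpleGraph V} {D D' : Set V} {a : V}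
  {ω β1 β2 β3 β4 B : ℝ} {n k : ℕ}

lemma sum_vertexWeight_sub_le_totalWeight_sub (hmono : Monotone (nonWhiteWeight β1 β2 β3 β4))
    (hω : β4 ≤ ω) (hD : D ⊆ D') (s : Finset V) :
    ∑ v ∈ s, (vertexWeight G D ω β1 β2 β3 β4 v - vertexWeight G D' ω β1 β2 β3 β4 v) ≤
      totalWeight G D ω β1 β2 β3 β4 - totalWeight G D' ω β1 β2 β3 β4 := by
  rw [totalWeight, totalWeight, ← Finset.sum_sub_distrib]
  exact Finset.sum_le_univ_sum_of_nonneg fun v => sub_nonneg.2 (vertexWeight_anti hmono hω hD v)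

lemma vertexWeight_add_le_totalWeight_sub (hmono : Monotone (nonWhiteWeight β1 β2 β3 β4))
    (hω : β4 ≤ ω)
    (hB : ∀ u, G.Adj a u → IsWhite G D u →
      nonWhiteWeight β1 β2 β3 β4 (whiteNbhdCount G (D ∪ {a}) u) ≤ B) :
    vertexWeight G D ω β1 β2 β3 β4 a + whiteNbhdCount G D a * (ω - B) ≤
      totalWeight G D ω β1 β2 β3 β4 - totalWeight G (D ∪ {a}) ω β1 β2 β3 β4 := by
  let drop (v : V) : ℝ :=
    vertexWeight G D ω β1 β2 β3 β4 v - vertexWeight G (D ∪ {a}) ω β1 β2 β3 β4 v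
  let W : Finset V := {u | G.Adj a u ∧ IsWhite G D u}
  have ha : a ∈ D ∪ {a} := Or.inr rfl
  have haW : a ∉ W := by simp [W]
  have hcard : W.card = whiteNbhdCount G D a := by
    rw [whiteNbhdCount, ← Set.ncard_coe_finset, Finset.coe_filter_univ]
  have drop_a : drop a = vertexWeight G D ω β1 β2 β3 β4 a := by
    simp only [drop, vertexWeight_of_mem ha, sub_zero]
  have le_drop : ∀ u ∈ W, ω - B ≤ drop u := fun u hu => by
    obtain ⟨hau, hu⟩ := (Finset.mem_filter_univ u).1 hu
    have hu' : ¬ IsWhite G (D ∪ {a}) u := fun h => h.not_adj ha hau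
    simp only [drop, vertexWeight_of_isWhite hu, vertexWeight_of_not_isWhite hu']
    exact sub_le_sub_left (hB u hau hu) ω
  calc vertexWeight G D ω β1 β2 β3 β4 a + whiteNbhdCount G D a * (ω - B)
      = drop a + W.card • (ω - B) := by rw [drop_a, hcard, nsmul_eq_mul]
    _ ≤ drop a + ∑ u ∈ W, drop u := by
      gcongr
      exact Finset.card_nsmul_le_sum W drop _ le_drop
    _ = ∑ v ∈ insert a W, drop v := (Finset.sum_insert haW).symm
    _ ≤ _ := sum_vertexWeight_sub_le_totalWeight_sub hmono hω Set.subset_union_left _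

lemma desirable_singleton_of_one_le (hmono : Monotone (nonWhiteWeight β1 β2 β3 β4)) (hω : β4 ≤ ω)
    (ha : a ∉ D) (hn : n ≤ whiteNbhdCount G D a) (hBω : B ≤ ω)
    (hB : ∀ u, G.Adj a u → IsWhite G D u →
      nonWhiteWeight β1 β2 β3 β4 (whiteNbhdCount G (D ∪ {a}) u) ≤ B)
    (hone : 1 ≤ vertexWeight G D ω β1 β2 β3 β4 a + n * (ω - B)) :
    Desirable G ω β1 β2 β3 β4 D {a} := by
  refine ⟨Set.singleton_subset_iff.2 ha, ?_⟩
  calc (({a} : Set V).ncard : ℝ)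
      = 1 := by rw [Set.ncard_singleton, Nat.cast_one]
    _ ≤ vertexWeight G D ω β1 β2 β3 β4 a + n * (ω - B) := hone
    _ ≤ vertexWeight G D ω β1 β2 β3 β4 a + whiteNbhdCount G D a * (ω - B) := by gcongr
    _ ≤ _ := vertexWeight_add_le_totalWeight_sub hmono hω hB

lemma IsWhite.desirable_singleton_of_le_whiteNbhdCount
    (hmono : Monotone (nonWhiteWeight β1 β2 β3 β4)) (hω : β4 ≤ ω)
    (ha : IsWhite G D a) (hn : n ≤ whiteNbhdCount G D a) (hone : 1 ≤ ω + n * (ω - β4)) :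
    Desirable G ω β1 β2 β3 β4 D {a} := by
  refine desirable_singleton_of_one_le hmono hω ha.notMem hn hω
    (fun u _ _ => nonWhiteWeight_le hmono _) ?_
  rwa [vertexWeight_of_isWhite ha]

lemma IsWhite.desirable_singleton_of_whiteNbhdCount_le
    (hmono : Monotone (nonWhiteWeight β1 β2 β3 β4)) (hω : β4 ≤ ω)
    (ha : IsWhite G D a) (hn : n ≤ whiteNbhdCount G D a)
    (hk : ∀ u, G.Adj a u → IsWhite G D u → whiteNbhdCount G D u ≤ k + 1)
    (hone : 1 ≤ ω + n * (ω - nonWhiteWeight β1 β2 β3 β4 k)) :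
    Desirable G ω β1 β2 β3 β4 D {a} := by
  refine desirable_singleton_of_one_le hmono hω ha.notMem hn ((nonWhiteWeight_le hmono k).trans hω)
    (fun u hau hu => hmono ?_) ?_
  · have hlt : whiteNbhdCount G (D ∪ {a}) u < whiteNbhdCount G D u :=
      whiteNbhdCount_lt_of_mem Set.subset_union_left hau.symm ha (Or.inr rfl)
    exact Nat.lt_succ_iff.1 (hlt.trans_le (hk u hau hu))
  · rwa [vertexWeight_of_isWhite ha]

lemma IsBlue.desirable_singleton_of_whiteNbhdCount_le
    (hmono : Monotone (nonWhiteWeight β1 β2 β3 β4)) (hω : β4 ≤ ω)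
    (ha : IsBlue G D a) (hn : n ≤ resDegree G D a)
    (hk : ∀ u, G.Adj a u → IsWhite G D u → whiteNbhdCount G D u ≤ k)
    (hone : 1 ≤ nonWhiteWeight β1 β2 β3 β4 n + n * (ω - nonWhiteWeight β1 β2 β3 β4 k)) :
    Desirable G ω β1 β2 β3 β4 D {a} := by
  rw [resDegree_eq_whiteNbhdCount ha.not_isWhite] at hn
  refine desirable_singleton_of_one_le hmono hω ha.notMem hn ((nonWhiteWeight_le hmono k).trans hω)
    (fun u hau hu => hmono ?_) (hone.trans ?_)
  · exact (whiteNbhdCount_anti Set.subset_union_left u).trans (hk u hau hu)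
  · rw [vertexWeight_of_not_isWhite ha.not_isWhite]
    exact add_le_add_left (hmono hn) _

end Desirable

/-- Claim 1: if some white vertex has at least 4 white neighbors, or some blue vertex
has degree at least 5 in `G_D^ι`, then there is a singleton `D`-desirable set. -/
theorem exists_singleton_desirable_of_big {V : Type*} [Fintype V] (G : SimpleGraph V)
    (D : Set V) (ω β1 β2 β3 β4 : ℝ)
    (hm1 : ω ≥ β4) (hm2 : β4 ≥ β3) (hm3 : β3 ≥ β2) (hm4 : β2 ≥ β1) (hm5 : β1 > 0)
    (hc1a : ω + 5 * (ω - β4) ≥ 1)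
    (hc1b : ω + 4 * (ω - β3) ≥ 1)
    (hc1c : β4 + 5 * (ω - β3) ≥ 1)
    (h : (∃ v, IsWhite G D v ∧ 4 ≤ whiteNbhdCount G D v) ∨
         (∃ v, IsBlue G D v ∧ 5 ≤ resDegree G D v)) :
    ∃ a : V, Desirable G ω β1 β2 β3 β4 D {a} := by
  have hmono := monotone_nonWhiteWeight hm5.le hm4 hm3 hm2
  by_cases hfive : ∃ v, IsWhite G D v ∧ 5 ≤ whiteNbhdCount G D v
  · obtain ⟨a, ha, hcount⟩ := hfive
    exact ⟨a, ha.desirable_singleton_of_le_whiteNbhdCount hmono hm1 hcount hc1a⟩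
  by_cases hfour : ∃ v, IsWhite G D v ∧ 4 ≤ whiteNbhdCount G D v
  · obtain ⟨a, ha, hcount⟩ := hfour
    have hle : ∀ u, G.Adj a u → IsWhite G D u → whiteNbhdCount G D u ≤ 3 + 1 :=
      fun u _ hu => not_lt.1 fun h5 => hfive ⟨u, hu, h5⟩
    exact ⟨a, ha.desirable_singleton_of_whiteNbhdCount_le hmono hm1 hcount hle hc1b⟩
  · obtain ⟨a, ha, hdeg⟩ := h.resolve_left hfour
    have hle : ∀ u, G.Adj a u → IsWhite G D u → whiteNbhdCount G D u ≤ 3 :=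
      fun u _ hu => not_lt.1 fun h4 => hfour ⟨u, hu, h4⟩
    exact ⟨a, ha.desirable_singleton_of_whiteNbhdCount_le hmono hm1 hdeg hle hc1c⟩
end
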